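/- arXiv:2106.00094 — 2 statements merged into one kernel-verified Lean document; each statement's English description precedes it below -/
import Mathlib

section
/- The map (γ, υ) ↦ [[γ, 0],[υ, J̆ ᵗγ^{−1} J̆]] restricts to a bijection from T_00 onto U^{opp}_{GSp_{2g},1}, the set of lower triangular matrices in GSp_{2g}(ℤ_p) with all diagonal entries equal to 1 that are congruent to the identity mod p. -/
open Matrix

/-- The `g × g` anti-diagonal matrix `J̆`: the `(i, j)` entry is `1` exactly when
`j = g + 1 - i` in one-based numbering, i.e. `i + j + 1 = g` in zero-based numbering. -/
def Jb (g : ℕ) (R : Type*) [CommRing R] : Matrix (Fin g) (Fin g) R :=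
  Matrix.of fun i j => if (i : ℕ) + (j : ℕ) + 1 = g then 1 else 0

/-- The standard symplectic matrix `J = [[0, -J̆], [J̆, 0]]` of size `2g`. -/
def Jmat (g : ℕ) (R : Type*) [CommRing R] :
    Matrix (Fin g ⊕ Fin g) (Fin g ⊕ Fin g) R :=
  Matrix.fromBlocks 0 (-(Jb g R)) (Jb g R) 0

/-- Membership in the symplectic similitude group `GSp_{2g}(R)`:
`ᵗγ J γ = ς · J` for some unit `ς` (the similitude factor). -/
def IsGSp {g : ℕ} {R : Type*} [CommRing R]
    (M : Matrix (Fin g ⊕ Fin g) (Fin g ⊕ Fin g) R) : Prop :=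
  IsUnit M.det ∧ ∃ s : Rˣ, Mᵀ * Jmat g R * M = (s : R) • Jmat g R

/-- The Iwahori subgroup `Iw_{GL_g}` of `GL_g(ℤ_p)`: invertible matrices over `ℤ_p`
whose reduction mod `p` is upper triangular. -/
def IwGL (p g : ℕ) [Fact p.Prime] : Set (Matrix (Fin g) (Fin g) ℤ_[p]) :=
  {M | IsUnit M.det ∧ ∀ i j : Fin g, j < i → (p : ℤ_[p]) ∣ M i j}

/-- The strict Iwahori subgroup `Iw⁺_{GL_g}` of `GL_g(ℤ_p)`: reduction mod `p` is diagonal. -/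
def IwGLplus (p g : ℕ) [Fact p.Prime] : Set (Matrix (Fin g) (Fin g) ℤ_[p]) :=
  {M | IsUnit M.det ∧ ∀ i j : Fin g, i ≠ j → (p : ℤ_[p]) ∣ M i j}

/-- `T_{GL_g,0}`: diagonal matrices in `GL_g(ℤ_p)`. -/
def TGL (p g : ℕ) [Fact p.Prime] : Set (Matrix (Fin g) (Fin g) ℤ_[p]) :=
  {M | IsUnit M.det ∧ ∀ i j : Fin g, i ≠ j → M i j = 0}

/-- `U_{GL_g,0}`: upper triangular unipotent matrices in `GL_g(ℤ_p)`. -/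
def UGL0 (p g : ℕ) [Fact p.Prime] : Set (Matrix (Fin g) (Fin g) ℤ_[p]) :=
  {M | (∀ i j : Fin g, j < i → M i j = 0) ∧ ∀ i : Fin g, M i i = 1}

/-- `U_{GL_g,1}`: upper triangular unipotent matrices congruent to `1` mod `p`. -/
def UGL1 (p g : ℕ) [Fact p.Prime] : Set (Matrix (Fin g) (Fin g) ℤ_[p]) :=
  {M | M ∈ UGL0 p g ∧ ∀ i j : Fin g, i < j → (p : ℤ_[p]) ∣ M i j}

/-- `U^{opp}_{GL_g,1}`: lower triangular unipotent matrices in `GL_g(ℤ_p)`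
congruent to `1` mod `p`. -/
def UGLopp1 (p g : ℕ) [Fact p.Prime] : Set (Matrix (Fin g) (Fin g) ℤ_[p]) :=
  {M | (∀ i j : Fin g, i < j → M i j = 0) ∧ (∀ i : Fin g, M i i = 1) ∧
    ∀ i j : Fin g, j < i → (p : ℤ_[p]) ∣ M i j}

/-- `B_{GL_g,0}`: upper triangular matrices in `GL_g(ℤ_p)`. -/
def BGL0 (p g : ℕ) [Fact p.Prime] : Set (Matrix (Fin g) (Fin g) ℤ_[p]) :=
  {M | IsUnit M.det ∧ ∀ i j : Fin g, j < i → M i j = 0}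

/-- The linear position of an index of a `2g × 2g` matrix indexed by `Fin g ⊕ Fin g`. -/
def idx {g : ℕ} : Fin g ⊕ Fin g → ℕ :=
  Sum.elim (fun i => (i : ℕ)) fun i => g + (i : ℕ)

/-- `U^{opp}_{GSp_{2g},1}`: lower triangular matrices in `GSp_{2g}(ℤ_p)` with all
diagonal entries equal to `1` that are congruent to the identity mod `p`. -/
def UGSpOpp1 (p g : ℕ) [Fact p.Prime] :
    Set (Matrix (Fin g ⊕ Fin g) (Fin g ⊕ Fin g) ℤ_[p]) :=
  {M | IsGSp M ∧ (∀ a b : Fin g ⊕ Fin g, idx a < idx b → M a b = 0) ∧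
    (∀ a : Fin g ⊕ Fin g, M a a = 1) ∧
    ∀ a b : Fin g ⊕ Fin g,
      (p : ℤ_[p]) ∣ (M a b - (1 : Matrix (Fin g ⊕ Fin g) (Fin g ⊕ Fin g) ℤ_[p]) a b)}

/-- The set `T₀` of pairs `(γ, υ)` with `γ ∈ Iw_{GL_g}`, `υ ∈ M_g(pℤ_p)` and
`ᵗγ J̆ υ = ᵗυ J̆ γ`. -/
def T0set (p g : ℕ) [Fact p.Prime] :
    Set (Matrix (Fin g) (Fin g) ℤ_[p] × Matrix (Fin g) (Fin g) ℤ_[p]) :=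
  {x | x.1 ∈ IwGL p g ∧ (∀ i j : Fin g, (p : ℤ_[p]) ∣ x.2 i j) ∧
    x.1ᵀ * Jb g ℤ_[p] * x.2 = x.2ᵀ * Jb g ℤ_[p] * x.1}

/-- The subset `T₀₀ ⊆ T₀` of pairs whose first component lies in `U^{opp}_{GL_g,1}`. -/
def T00set (p g : ℕ) [Fact p.Prime] :
    Set (Matrix (Fin g) (Fin g) ℤ_[p] × Matrix (Fin g) (Fin g) ℤ_[p]) :=
  {x | x ∈ T0set p g ∧ x.1 ∈ UGLopp1 p g}

/-- The map `(γ, υ) ↦ [[γ, 0], [υ, J̆ ᵗγ⁻¹ J̆]]`. -/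
noncomputable def Phi (p g : ℕ) [Fact p.Prime]
    (x : Matrix (Fin g) (Fin g) ℤ_[p] × Matrix (Fin g) (Fin g) ℤ_[p]) :
    Matrix (Fin g ⊕ Fin g) (Fin g ⊕ Fin g) ℤ_[p] :=
  Matrix.fromBlocks x.1 0 x.2 (Jb g ℤ_[p] * (x.1⁻¹)ᵀ * Jb g ℤ_[p])

theorem Jb_eq (g : ℕ) (R : Type*) [CommRing R] (i j : Fin g) :
    Jb g R i j = if j = Fin.rev i then 1 else 0 := by
  unfold Jb
  simp only [Matrix.of_apply]
  congr 1
  rw [Fin.ext_iff, Fin.val_rev]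
  have := i.2
  have := j.2
  apply propext
  omega

theorem Jb_mul_apply (g : ℕ) (R : Type*) [CommRing R] (M : Matrix (Fin g) (Fin g) R)
    (i j : Fin g) : (Jb g R * M) i j = M (Fin.rev i) j := by
  simp [Matrix.mul_apply, Jb_eq]

theorem mul_Jb_apply (g : ℕ) (R : Type*) [CommRing R] (M : Matrix (Fin g) (Fin g) R)
    (i j : Fin g) : (M * Jb g R) i j = M i (Fin.rev j) := by
  have h : ∀ k : Fin g, (j = Fin.rev k) ↔ (k = Fin.rev j) := by
    intro k
    constructor
    · rintro rfl
      simp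
    · rintro rfl
      simp
  simp [Matrix.mul_apply, Jb_eq, h]

theorem Jb_mul_Jb (g : ℕ) (R : Type*) [CommRing R] : Jb g R * Jb g R = 1 := by
  ext i j
  rw [Jb_mul_apply, Jb_eq, Matrix.one_apply]
  simp [eq_comm]

theorem Jb_transpose (g : ℕ) (R : Type*) [CommRing R] : (Jb g R)ᵀ = Jb g R := by
  ext i j
  simp only [Matrix.transpose_apply, Jb, Matrix.of_apply]
  congr 1
  apply propext
  omega

theorem UGLopp1_det {p g : ℕ} [Fact p.Prime] {A : Matrix (Fin g) (Fin g) ℤ_[p]}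
    (hA : A ∈ UGLopp1 p g) : A.det = 1 := by
  rw [Matrix.det_of_lowerTriangular A (fun i j h => hA.1 i j h)]
  simp [hA.2.1]

theorem UGLopp1_inv {p g : ℕ} [Fact p.Prime] {A : Matrix (Fin g) (Fin g) ℤ_[p]}
    (hA : A ∈ UGLopp1 p g) : (∀ i j : Fin g, i < j → A⁻¹ i j = 0) ∧
    (∀ i : Fin g, A⁻¹ i i = 1) ∧
    (∀ i j : Fin g, (p : ℤ_[p]) ∣ A⁻¹ i j - (1 : Matrix (Fin g) (Fin g) ℤ_[p]) i j) := by
  have hdet : IsUnit A.det := by rw [UGLopp1_det hA]; exact isUnit_one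
  have hlow : ∀ i j : Fin g, i < j → A⁻¹ i j = 0 := by
    haveI := A.invertibleOfIsUnitDet hdet
    have hb : A.BlockTriangular OrderDual.toDual := fun i j h => hA.1 i j h
    have := Matrix.blockTriangular_inv_of_blockTriangular hb
    exact fun i j h => this h
  refine ⟨hlow, ?_, ?_⟩
  · intro i
    have h := congrFun (congrFun (A.mul_nonsing_inv hdet) i) i
    rw [Matrix.mul_apply, Finset.sum_eq_single i] at h
    · simpa [hA.2.1] using h
    · intro k _ hk
      rcases lt_or_gt_of_ne hk with h1 | h1
      · rw [hlow k i h1, mul_zero]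
      · rw [hA.1 i k h1, zero_mul]
    · simp
  · intro i j
    have h : A⁻¹ - 1 = A⁻¹ * (1 - A) := by
      rw [mul_sub, A.nonsing_inv_mul hdet, mul_one]
    have h2 := congrFun (congrFun h i) j
    rw [Matrix.sub_apply, Matrix.mul_apply] at h2
    rw [h2]
    refine Finset.dvd_sum fun k _ => Dvd.dvd.mul_left ?_ _
    rw [Matrix.sub_apply]
    rcases lt_trichotomy k j with h1 | h1 | h1
    · rw [hA.1 k j h1, Matrix.one_apply_ne h1.ne]
      simp
    · subst h1
      simp [hA.2.1]
    · rw [Matrix.one_apply_ne h1.ne']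
      simpa using hA.2.2 k j h1

theorem gsp_block {g : ℕ} {R : Type*} [CommRing R] (A C D : Matrix (Fin g) (Fin g) R) :
    (Matrix.fromBlocks A 0 C D)ᵀ * Jmat g R * Matrix.fromBlocks A 0 C D =
      Matrix.fromBlocks (Cᵀ * Jb g R * A - Aᵀ * Jb g R * C) (-(Aᵀ * Jb g R * D))
        (Dᵀ * Jb g R * A) 0 := by
  simp [Jmat, Matrix.fromBlocks_transpose, Matrix.fromBlocks_multiply, sub_eq_add_neg]

theorem statement11 (p g : ℕ) [Fact p.Prime] (hg : 1 ≤ g) :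
    (∀ x ∈ T00set p g, Phi p g x ∈ UGSpOpp1 p g) ∧
    (∀ x ∈ T00set p g, ∀ y ∈ T00set p g, Phi p g x = Phi p g y → x = y) ∧
    ∀ M ∈ UGSpOpp1 p g, ∃ x ∈ T00set p g, Phi p g x = M := by
  refine ⟨?_, ?_, ?_⟩
  · rintro ⟨A, C⟩ ⟨⟨-, hC, hAC⟩, hA⟩
    dsimp only at hC hAC hA
    obtain ⟨i1, i2, i3⟩ := UGLopp1_inv hA
    have hdet1 := UGLopp1_det hA
    have hdet : IsUnit A.det := by rw [hdet1]; exact isUnit_one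
    have hJ := Jb_mul_Jb g ℤ_[p]
    have hT : Aᵀ * (A⁻¹)ᵀ = 1 := by
      rw [← Matrix.transpose_mul, A.nonsing_inv_mul hdet, Matrix.transpose_one]
    have hAD : Aᵀ * Jb g ℤ_[p] * (Jb g ℤ_[p] * (A⁻¹)ᵀ * Jb g ℤ_[p]) = Jb g ℤ_[p] := by
      calc _ = Aᵀ * ((Jb g ℤ_[p] * Jb g ℤ_[p]) * (A⁻¹)ᵀ * Jb g ℤ_[p]) := by
            simp only [Matrix.mul_assoc]
        _ = _ := by rw [hJ, Matrix.one_mul, ← Matrix.mul_assoc, hT, Matrix.one_mul]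
    have hDA : (Jb g ℤ_[p] * (A⁻¹)ᵀ * Jb g ℤ_[p])ᵀ * Jb g ℤ_[p] * A = Jb g ℤ_[p] := by
      have := congrArg Matrix.transpose hAD
      rwa [Matrix.transpose_mul, Matrix.transpose_mul Aᵀ, Matrix.transpose_transpose,
        Jb_transpose, ← Matrix.mul_assoc] at this
    have hD : ∀ i j, (Jb g ℤ_[p] * (A⁻¹)ᵀ * Jb g ℤ_[p]) i j = A⁻¹ (Fin.rev j) (Fin.rev i) := by
      intro i j
      rw [mul_Jb_apply, Jb_mul_apply, Matrix.transpose_apply]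
    refine ⟨⟨?_, 1, ?_⟩, ?_, ?_, ?_⟩
    · have hJd : (Jb g ℤ_[p]).det * (Jb g ℤ_[p]).det = 1 := by
        rw [← Matrix.det_mul, hJ, Matrix.det_one]
      have hinv : (A⁻¹).det = 1 := by
        have := congrArg Matrix.det (A.nonsing_inv_mul hdet)
        rwa [Matrix.det_mul, hdet1, mul_one, Matrix.det_one] at this
      unfold Phi
      rw [Matrix.det_fromBlocks_zero₁₂]
      simp [hdet1, hinv, hJd]
    · unfold Phi
      rw [gsp_block]
      dsimp only
      rw [hAD, hDA, hAC, sub_self]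
      simp [Jmat]
    · rintro (i | i) (j | j) h
      · exact hA.1 i j (by simpa [idx] using h)
      · rfl
      · simp [idx] at h
        omega
      · have h' : i < j := by simpa [idx] using h
        exact (hD i j).trans (i1 _ _ (Fin.rev_lt_rev.mpr h'))
    · rintro (i | i)
      · exact hA.2.1 i
      · exact (hD i i).trans (i2 _)
    · rintro (i | i) (j | j)
      · have e : (1 : Matrix (Fin g ⊕ Fin g) (Fin g ⊕ Fin g) ℤ_[p]) (Sum.inl i) (Sum.inl j)
            = (1 : Matrix (Fin g) (Fin g) ℤ_[p]) i j := by simp [Matrix.one_apply]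
        rw [e]
        change (p : ℤ_[p]) ∣ A i j - _
        rcases lt_trichotomy i j with h1 | h1 | h1
        · rw [hA.1 i j h1, Matrix.one_apply_ne h1.ne]
          simp
        · subst h1
          simp [hA.2.1]
        · rw [Matrix.one_apply_ne h1.ne', sub_zero]
          exact hA.2.2 i j h1
      · simp [Phi, Matrix.one_apply]
      · simpa [Phi, Matrix.one_apply] using hC i j
      · have e : (1 : Matrix (Fin g ⊕ Fin g) (Fin g ⊕ Fin g) ℤ_[p]) (Sum.inr i) (Sum.inr j)
            = (1 : Matrix (Fin g) (Fin g) ℤ_[p]) (Fin.rev j) (Fin.rev i) := by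
          simp [Matrix.one_apply, eq_comm]
        rw [e]
        change (p : ℤ_[p]) ∣ (Jb g ℤ_[p] * (A⁻¹)ᵀ * Jb g ℤ_[p]) i j - _
        rw [hD]
        exact i3 _ _
  · rintro ⟨A, C⟩ - ⟨A', C'⟩ - h
    obtain ⟨h1, -, h2, -⟩ := Matrix.fromBlocks_inj.mp h
    exact Prod.ext h1 h2
  · rintro M ⟨⟨-, s, hs⟩, hlow, hdiag, hcong⟩
    obtain ⟨A, B, C, D, rfl⟩ : ∃ A B C D, M = Matrix.fromBlocks A B C D :=
      ⟨_, _, _, _, (Matrix.fromBlocks_toBlocks M).symm⟩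
    have hB : B = 0 := by
      ext i j
      exact hlow (Sum.inl i) (Sum.inr j) (by simp [idx]; omega)
    subst hB
    have hA : A ∈ UGLopp1 p g := by
      refine ⟨fun i j h => hlow (Sum.inl i) (Sum.inl j) (by simpa [idx] using h),
        fun i => hdiag (Sum.inl i), fun i j h => ?_⟩
      simpa [Matrix.one_apply, h.ne'] using hcong (Sum.inl i) (Sum.inl j)
    have hDlow : ∀ i j, i < j → D i j = 0 := fun i j h =>
      hlow (Sum.inr i) (Sum.inr j) (by simpa [idx] using h)
    have hDdiag : ∀ i, D i i = 1 := fun i => hdiag (Sum.inr i)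
    have hC : ∀ i j, (p : ℤ_[p]) ∣ C i j := by
      intro i j
      simpa [Matrix.one_apply] using hcong (Sum.inr i) (Sum.inl j)
    have hdet : IsUnit A.det := by rw [UGLopp1_det hA]; exact isUnit_one
    rw [gsp_block, Jmat, Matrix.fromBlocks_smul, Matrix.fromBlocks_inj] at hs
    obtain ⟨h11, h12, -, -⟩ := hs
    rw [smul_neg, neg_inj] at h12
    rw [smul_zero, sub_eq_zero] at h11
    have hs1 : (s : ℤ_[p]) = 1 := by
      let i : Fin g := ⟨0, hg⟩
      have h := congrFun (congrFun h12 i) (Fin.rev i)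
      rw [Matrix.smul_apply, Jb_eq, if_pos rfl, Matrix.mul_assoc, Matrix.mul_apply,
        Finset.sum_eq_single i] at h
      · rw [Jb_mul_apply, Matrix.transpose_apply, hA.2.1, hDdiag] at h
        simpa using h.symm
      · intro k _ hk
        rw [Jb_mul_apply, hDlow, mul_zero]
        rw [Fin.rev_lt_rev]
        exact lt_of_le_of_ne (Fin.mk_le_of_le_val (Nat.zero_le _)) hk.symm
      · simp
    rw [hs1, one_smul] at h12
    refine ⟨(A, C), ⟨⟨⟨hdet, hA.2.2⟩, hC, h11.symm⟩, hA⟩, ?_⟩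
    unfold Phi
    dsimp only
    congr 1
    have hT : (A⁻¹)ᵀ * Aᵀ = 1 := by
      rw [← Matrix.transpose_mul, A.mul_nonsing_inv hdet, Matrix.transpose_one]
    have hJ := Jb_mul_Jb g ℤ_[p]
    calc Jb g ℤ_[p] * (A⁻¹)ᵀ * Jb g ℤ_[p]
        = Jb g ℤ_[p] * (A⁻¹)ᵀ * (Aᵀ * Jb g ℤ_[p] * D) := by rw [h12]
      _ = Jb g ℤ_[p] * ((A⁻¹)ᵀ * Aᵀ) * Jb g ℤ_[p] * D := by simp only [Matrix.mul_assoc]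
      _ = D := by rw [hT, Matrix.mul_one, hJ, Matrix.one_mul]
end

section
/- For every 1 ≤ i ≤ g and every (γ, υ) ∈ T_00, the pair (u^{□}_{p,i} γ u^{□,−1}_{p,i}, u^{■}_{p,i} υ u^{□,−1}_{p,i}), a priori with entries in ℚ_p, has all entries in ℤ_p and again lies in T_00. -/
open Matrix

/-- Entrywise inclusion `M(ℤ_p) → M(ℚ_p)`. -/
def toQ {p : ℕ} [Fact p.Prime] {m n : Type*} (M : Matrix m n ℤ_[p]) :
    Matrix m n ℚ_[p] :=
  M.map fun x => (x : ℚ_[p])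

/-- The diagonal matrix `u^{□}_{p,i} = diag(1_i, p·1_{g-i})`. -/
noncomputable def uSq (p g : ℕ) [Fact p.Prime] (i : ℕ) : Matrix (Fin g) (Fin g) ℚ_[p] :=
  Matrix.diagonal fun j => if (j : ℕ) < i then 1 else (p : ℚ_[p])

/-- The diagonal matrix `u^{■}_{p,i}`: equal to `diag(p·1_{g-i}, p²·1_i)` for
`1 ≤ i ≤ g - 1`, and to `p·1_g` for `i = g`. -/
noncomputable def uBl (p g : ℕ) [Fact p.Prime] (i : ℕ) : Matrix (Fin g) (Fin g) ℚ_[p] :=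
  if i = g then Matrix.diagonal fun _ => (p : ℚ_[p])
  else Matrix.diagonal fun j => if (j : ℕ) < g - i then (p : ℚ_[p]) else (p : ℚ_[p]) ^ 2

lemma toQ_mul' {p g : ℕ} [Fact p.Prime] (A B : Matrix (Fin g) (Fin g) ℤ_[p]) :
    toQ (A * B) = toQ A * toQ B :=
  Matrix.map_mul (f := PadicInt.Coe.ringHom (p := p))

lemma toQ_inj' {p g : ℕ} [Fact p.Prime] {A B : Matrix (Fin g) (Fin g) ℤ_[p]}
    (h : toQ A = toQ B) : A = B := by
  ext a b
  have := congrFun (congrFun h a) b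
  exact Subtype.ext this

lemma uSq_inv' (p g : ℕ) [Fact p.Prime] (i : ℕ) :
    (uSq p g i)⁻¹ = Matrix.diagonal fun j : Fin g => if (j : ℕ) < i then 1 else (p : ℚ_[p])⁻¹ := by
  have hp : (p : ℚ_[p]) ≠ 0 := by exact_mod_cast (Fact.out : p.Prime).ne_zero
  apply Matrix.inv_eq_right_inv
  rw [uSq, Matrix.diagonal_mul_diagonal, ← Matrix.diagonal_one]
  congr 1
  ext j
  split_ifs <;> simp [hp]

lemma toQ_Jb' (p g : ℕ) [Fact p.Prime] : toQ (Jb g ℤ_[p]) = Jb g ℚ_[p] := by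
  ext a b
  simp only [toQ, Jb, Matrix.map_apply, Matrix.of_apply]
  split_ifs <;> simp

lemma uBl_eq' (p g : ℕ) [Fact p.Prime] (i : ℕ) :
    uBl p g i = Matrix.diagonal fun j : Fin g => if i = g then (p : ℚ_[p]) else
      if (j : ℕ) < g - i then (p : ℚ_[p]) else (p : ℚ_[p]) ^ 2 := by
  unfold uBl
  split_ifs <;> rfl

/-- The scalar with `u^□ J u^■ = c J`. -/
lemma uSq_J_uBl (p g : ℕ) [Fact p.Prime] (i : ℕ) :
    uSq p g i * Jb g ℚ_[p] * uBl p g i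
      = (if i = g then (p : ℚ_[p]) else (p : ℚ_[p]) ^ 2) • Jb g ℚ_[p] := by
  rw [uBl_eq', uSq]
  ext a b
  have ha := a.2
  have hb := b.2
  simp only [Matrix.mul_diagonal, Matrix.diagonal_mul, Matrix.smul_apply, Jb, Matrix.of_apply,
    smul_eq_mul]
  split_ifs <;> first | omega | ring

lemma uBl_J_uSq (p g : ℕ) [Fact p.Prime] (i : ℕ) :
    uBl p g i * Jb g ℚ_[p] * uSq p g i
      = (if i = g then (p : ℚ_[p]) else (p : ℚ_[p]) ^ 2) • Jb g ℚ_[p] := by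
  rw [uBl_eq', uSq]
  ext a b
  have ha := a.2
  have hb := b.2
  simp only [Matrix.mul_diagonal, Matrix.diagonal_mul, Matrix.smul_apply, Jb, Matrix.of_apply,
    smul_eq_mul]
  split_ifs <;> first | omega | ring

lemma toQ_symm' {p g : ℕ} [Fact p.Prime] (i : ℕ) {G U G' U' : Matrix (Fin g) (Fin g) ℤ_[p]}
    (h1 : toQ G' = uSq p g i * toQ G * (uSq p g i)⁻¹)
    (h2 : toQ U' = uBl p g i * toQ U * (uSq p g i)⁻¹)
    (h : Gᵀ * Jb g ℤ_[p] * U = Uᵀ * Jb g ℤ_[p] * G) :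
    G'ᵀ * Jb g ℤ_[p] * U' = U'ᵀ * Jb g ℤ_[p] * G' := by
  apply toQ_inj'
  have ht : ∀ A : Matrix (Fin g) (Fin g) ℤ_[p], toQ Aᵀ = (toQ A)ᵀ := fun A => rfl
  have hq := congrArg toQ h
  simp only [toQ_mul', ht, toQ_Jb'] at hq ⊢
  rw [h1, h2]
  have hs : (uSq p g i)ᵀ = uSq p g i := by simp [uSq]
  have hb : (uBl p g i)ᵀ = uBl p g i := by simp [uBl_eq']
  simp only [Matrix.transpose_mul, hs, hb]
  generalize ((uSq p g i)⁻¹)ᵀ = Dt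
  generalize (uSq p g i)⁻¹ = Di
  have e1 := uSq_J_uBl p g i
  have e2 := uBl_J_uSq p g i
  generalize (if i = g then (p : ℚ_[p]) else (p : ℚ_[p]) ^ 2) = c at e1 e2
  calc _ = Dt * ((toQ G)ᵀ * (uSq p g i * Jb g ℚ_[p] * uBl p g i) * toQ U) * Di := by
          simp only [Matrix.mul_assoc]
    _ = Dt * ((toQ U)ᵀ * (uBl p g i * Jb g ℚ_[p] * uSq p g i) * toQ G) * Di := by
          rw [e1, e2]
          simp only [Matrix.mul_smul, Matrix.smul_mul, hq]
    _ = _ := by simp only [Matrix.mul_assoc]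

theorem statement14 (p g : ℕ) [Fact p.Prime] (hg : 1 ≤ g) (i : ℕ)
    (hi1 : 1 ≤ i) (hig : i ≤ g) :
    ∀ x ∈ T00set p g, ∃ γ' υ' : Matrix (Fin g) (Fin g) ℤ_[p],
      toQ γ' = uSq p g i * toQ x.1 * (uSq p g i)⁻¹ ∧
      toQ υ' = uBl p g i * toQ x.2 * (uSq p g i)⁻¹ ∧
      (γ', υ') ∈ T00set p g := by
  rintro ⟨G, U⟩ ⟨⟨⟨-, -⟩, hU, hsym⟩, hup, hdiag, hlow⟩
  dsimp only at hU hsym hup hdiag hlow ⊢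
  have hp : (p : ℚ_[p]) ≠ 0 := by exact_mod_cast (Fact.out : p.Prime).ne_zero
  let G' : Matrix (Fin g) (Fin g) ℤ_[p] := Matrix.of fun a b =>
    if (b : ℕ) < i ∧ i ≤ (a : ℕ) then (p : ℤ_[p]) * G a b else G a b
  let U' : Matrix (Fin g) (Fin g) ℤ_[p] := Matrix.of fun a b =>
    (if i = g ∨ (a : ℕ) < g - i then 1 else (p : ℤ_[p])) *
      ((if (b : ℕ) < i then (p : ℤ_[p]) else 1) * U a b)
  have h1 : toQ G' = uSq p g i * toQ G * (uSq p g i)⁻¹ := by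
    rw [uSq_inv', uSq]
    ext a b
    simp only [Matrix.mul_diagonal, Matrix.diagonal_mul, toQ, Matrix.map_apply, G', Matrix.of_apply]
    by_cases ha : (a : ℕ) < i <;> by_cases hb : (b : ℕ) < i
    · simp [ha, hb, not_le.mpr ha]
    · have : G a b = 0 := hup a b (by rw [Fin.lt_def]; omega)
      simp [this]
    · simp [ha, hb, not_lt.mp ha]
    · simp only [ha, hb, false_and, if_false]
      field_simp
  have h2 : toQ U' = uBl p g i * toQ U * (uSq p g i)⁻¹ := by
    rw [uSq_inv', uBl_eq']
    ext a b
    simp only [Matrix.mul_diagonal, Matrix.diagonal_mul, toQ, Matrix.map_apply, U', Matrix.of_apply]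
    have hc : (((p : ℤ_[p]) : ℚ_[p])) = p := PadicInt.coe_natCast p
    rw [PadicInt.coe_mul, PadicInt.coe_mul]
    by_cases hb : (b : ℕ) < i
    · simp only [if_pos hb, hc]
      by_cases hi : i = g
      · rw [if_pos hi, if_pos (Or.inl hi), PadicInt.coe_one]
        ring
      · by_cases ha : (a : ℕ) < g - i
        · rw [if_neg hi, if_pos ha, if_pos (Or.inr ha), PadicInt.coe_one]
          ring
        · rw [if_neg hi, if_neg ha, if_neg (by tauto), hc]
          ring
    · have hi : i ≠ g := by
        have := b.2
        omega
      simp only [if_neg hb]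
      by_cases ha : (a : ℕ) < g - i
      · rw [if_neg hi, if_pos ha, if_pos (Or.inr ha), PadicInt.coe_one]
        field_simp
      · rw [if_neg hi, if_neg ha, if_neg (by tauto), hc, PadicInt.coe_one]
        field_simp
  have hup' : ∀ a b : Fin g, a < b → G' a b = 0 := by
    intro a b hab
    simp [G', hup a b hab]
  have hdiag' : ∀ a : Fin g, G' a a = 1 := by
    intro a
    have : ¬ ((a : ℕ) < i ∧ i ≤ (a : ℕ)) := by omega
    simp only [G', Matrix.of_apply, if_neg this, hdiag]
  have hlow' : ∀ a b : Fin g, b < a → (p : ℤ_[p]) ∣ G' a b := by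
    intro a b hab
    simp only [G', Matrix.of_apply]
    split_ifs
    · exact Dvd.intro _ rfl
    · exact hlow a b hab
  refine ⟨G', U', h1, h2, ⟨⟨?_, hlow'⟩, ?_, toQ_symm' i h1 h2 hsym⟩, hup', hdiag', hlow'⟩
  · have : G'.det = 1 := by
      rw [Matrix.det_of_isLowerTriangular G' (fun a b hab => hup' a b hab)]
      simp [hdiag']
    simp [this]
  · intro a b
    exact ((hU a b).mul_left _).mul_left _
end
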